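/- Let n ≥ 1, s > 0, q ∈ [1,∞], and p, p₁ ∈ [1,∞) with p < p₁ ≤ 2p and s > n(2/p₁ − 1/p). Then there is a constant C > 0 such that for every Schwartz function u on ℝⁿ, ‖u²‖_{B^s_{p,q}} ≤ C ‖u‖²_{B^s_{p₁,q}}. -/

import Mathlib

open MeasureTheory Real Filter
open scoped ENNReal FourierTransform

noncomputable section

/-- `ℝⁿ` as a Euclidean space. -/
abbrev Rn (n : ℕ) : Type := EuclideanSpace ℝ (Fin n)

variable {n : ℕ}

/-- The Fourier transform of a real-valued Schwartz function, viewed as a ℂ-valued function. -/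
def ftC (f : SchwartzMap (Rn n) ℝ) : Rn n → ℂ :=
  𝓕 (fun x => (f x : ℂ))

/-- `ψ₀` is a Littlewood–Paley function: an even, radial Schwartz function whose Fourier
transform is nonnegative, supported in the annulus `{ξ : 1/2 < ‖ξ‖ < 2}`, and satisfies
`∑_{j ∈ ℤ} ψ̂₀(2^{-j} ξ) = 1` for `ξ ≠ 0`. -/
structure IsLPF (n : ℕ) (ψ₀ : SchwartzMap (Rn n) ℝ) : Prop where
  even : ∀ x : Rn n, ψ₀ (-x) = ψ₀ x
  radial : ∀ x y : Rn n, ‖x‖ = ‖y‖ → ψ₀ x = ψ₀ y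
  ft_im : ∀ ξ : Rn n, (ftC ψ₀ ξ).im = 0
  ft_nonneg : ∀ ξ : Rn n, 0 ≤ (ftC ψ₀ ξ).re
  ft_supp : ∀ ξ : Rn n, ftC ψ₀ ξ ≠ 0 → 1/2 < ‖ξ‖ ∧ ‖ξ‖ < 2
  ft_sum : ∀ ξ : Rn n, ξ ≠ 0 → HasSum (fun j : ℤ => ftC ψ₀ ((2:ℝ) ^ (-j) • ξ)) 1

/-- The Littlewood–Paley kernel `ψ_j(x) = 2^{jn} ψ₀(2^j x)`, whose Fourier transform is
`ψ̂₀(2^{-j} ξ)`. -/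
def lpKernel (ψ₀ : SchwartzMap (Rn n) ℝ) (j : ℤ) (x : Rn n) : ℝ :=
  (2:ℝ) ^ (j * (n:ℤ)) * ψ₀ ((2:ℝ) ^ j • x)

/-- The Littlewood–Paley projection `Δ_j f = ψ_j ∗ f`. -/
def lpProj (ψ₀ : SchwartzMap (Rn n) ℝ) (j : ℤ) (f : Rn n → ℝ) : Rn n → ℝ :=
  MeasureTheory.convolution (lpKernel ψ₀ j) f (ContinuousLinearMap.mul ℝ ℝ) volume

/-- `S_j f = ∑_{m ≤ j} Δ_m f`, the low-frequency cutoff; this is the L² function whose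
Fourier transform is `(∑_{m ≤ j} ψ̂₀(2^{-m} ξ)) f̂(ξ)`. -/
def lowProj (ψ₀ : SchwartzMap (Rn n) ℝ) (j : ℤ) (f : Rn n → ℝ) (x : Rn n) : ℝ :=
  ∑' m : ℤ, if m ≤ j then lpProj ψ₀ m f x else 0

/-- `Ψ` is the low-frequency piece of the Littlewood–Paley decomposition:
`Ψ̂ = 1 − ∑_{k ≥ 0} ψ̂_k`. -/
def IsLowPiece (ψ₀ Ψ : SchwartzMap (Rn n) ℝ) : Prop :=
  ∀ ξ : Rn n, ftC Ψ ξ = 1 - ∑' k : ℕ, ftC ψ₀ ((2:ℝ) ^ (-(k:ℤ)) • ξ)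

/-- The inhomogeneous Besov norm `‖f‖_{B^s_{p,q}}`, valued in `[0,∞]`:
`‖Ψ∗f‖_{L^p} + (∑_{j ≥ 0} (2^{js} ‖Δ_j f‖_{L^p})^q)^{1/q}`, with the supremum over `j`
replacing the `ℓ^q` sum when `q = ∞`. -/
def besovNorm (ψ₀ Ψ : SchwartzMap (Rn n) ℝ) (s : ℝ) (p q : ℝ≥0∞) (f : Rn n → ℝ) : ℝ≥0∞ :=
  eLpNorm (MeasureTheory.convolution (fun x => Ψ x) f (ContinuousLinearMap.mul ℝ ℝ) volume)
      p volume +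
    (if q = ∞ then
      ⨆ j : ℕ, ENNReal.ofReal ((2:ℝ) ^ ((j:ℝ) * s)) * eLpNorm (lpProj ψ₀ (j:ℤ) f) p volume
    else
      (∑' j : ℕ, (ENNReal.ofReal ((2:ℝ) ^ ((j:ℝ) * s)) *
        eLpNorm (lpProj ψ₀ (j:ℤ) f) p volume) ^ q.toReal) ^ (1 / q.toReal))

/-- The heat semigroup `e^{tΔ} f = h_t ∗ f` with `h_t(x) = (4πt)^{-n/2} e^{-‖x‖²/(4t)}`. -/
def heatOp (n : ℕ) (t : ℝ) (f : Rn n → ℝ) : Rn n → ℝ :=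
  MeasureTheory.convolution
    (fun x : Rn n => (4 * π * t) ^ (-(n:ℝ)/2) * Real.exp (-‖x‖^2 / (4*t))) f
    (ContinuousLinearMap.mul ℝ ℝ) volume

/-- The partial derivative `∂_{x_i} f`. -/
def pderiv' (i : Fin n) (f : Rn n → ℝ) (x : Rn n) : ℝ :=
  fderiv ℝ f x (EuclideanSpace.single i 1)

/-- The Laplacian `Δf = ∑ᵢ ∂²_{x_i} f`. -/
def lapl (f : Rn n → ℝ) (x : Rn n) : ℝ :=
  ∑ i : Fin n, pderiv' i (pderiv' i f) x

/-!
Split `u v = S_k u S_k v + (u - S_k u) v + S_k u (v - S_k v)`, where `S_k f` is the convolution of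
`f` with `2^{kn} Ψ(2^k ·)`. The first term has frequencies of size at most `2^{k+1}`, so it is
invisible to `Δ_{k+2}`; by Hölder's inequality with `1/p = 1/p₁ + 1/r` the other two contribute at
most a multiple of `τ_k(u) ‖v‖_r + ‖u‖_r τ_k(v)`, where `τ_k(f) = ∑_{j ≥ k} ‖Δ_j f‖_{p₁}`. For
`s > 0` the sequence `2^{ks} τ_k(f)` is the convolution of `2^{js} ‖Δ_j f‖_{p₁}` with the summable
weights `2^{-js}`, so it is controlled in `ℓ^q` by the Besov norm. It remains to embed `B^s_{p₁,q}`
into `L^r`, which by Bernstein's inequality requires exactly `s > n(1/p₁ - 1/r) = n(2/p₁ - 1/p)`;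
the condition `p₁ ≤ 2p` says that `p₁ ≤ r`.
-/

open scoped SchwartzMap NNReal Topology Convolution

section LpSpaces

variable {α : Type*} [MeasurableSpace α] {μ : Measure α}

theorem eLpNorm_tsum_le {p : ℝ≥0∞} (hp : 1 ≤ p) {f : ℕ → α → ℝ≥0∞}
    (hf : ∀ j, AEMeasurable (f j) μ) :
    eLpNorm (fun x => ∑' j, f j x) p μ ≤ ∑' j, eLpNorm (f j) p μ := by
  have sum_le (N : ℕ) :
      eLpNorm (fun x => ∑ j ∈ Finset.range N, f j x) p μ ≤ ∑' j, eLpNorm (f j) p μ := by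
    have partial_le := eLpNorm_sum_le (s := Finset.range N) (p := p) (μ := μ) (f := f)
      (fun j _ => (hf j).aestronglyMeasurable) hp
    simp only [Finset.sum_fn] at partial_le
    exact partial_le.trans (ENNReal.sum_le_tsum _)
  obtain rfl | hp_top := eq_or_ne p ∞
  · have ae_le : ∀ᵐ x ∂μ, ∀ j, ‖f j x‖ₑ ≤ eLpNorm (f j) ∞ μ :=
      ae_all_iff.2 fun j => by simpa using enorm_ae_le_eLpNormEssSup (f j) μ
    refine eLpNormEssSup_le_of_ae_enorm_bound (ae_le.mono fun x hx => ?_)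
    exact ENNReal.tsum_le_tsum hx
  have hp_pos : 0 < p.toReal := ENNReal.toReal_pos (zero_lt_one.trans_le hp).ne' hp_top
  have p_ne : p ≠ 0 := (zero_lt_one.trans_le hp).ne'
  simp only [eLpNorm_eq_lintegral_rpow_enorm_toReal p_ne hp_top, one_div,
    ENNReal.rpow_inv_le_iff hp_pos, enorm_eq_self] at sum_le ⊢
  refine le_of_tendsto' (lintegral_tendsto_of_tendsto_of_monotone (fun N => ?_)
    (.of_forall fun x => ?_) (.of_forall fun x => ?_)) sum_le
  · exact (Finset.aemeasurable_fun_sum _ fun j _ => hf j).pow_const _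
  · intro M N hMN
    dsimp only
    gcongr
  · exact (ENNReal.continuous_rpow_const.tendsto _).comp ENNReal.summable.hasSum.tendsto_sum_nat

theorem eLpNorm_le_eLpNorm_top_rpow_mul_eLpNorm_rpow {E : Type*} [NormedAddCommGroup E]
    {p r : ℝ≥0∞} (hp : p ≠ 0) (hpr : p ≤ r) {f : α → E} (hf : AEStronglyMeasurable f μ) :
    eLpNorm f r μ ≤ eLpNorm f ∞ μ ^ (1 - (p / r).toReal) * eLpNorm f p μ ^ (p / r).toReal := by
  obtain rfl | hr := eq_or_ne r ∞
  · simp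
  have hp_top : p ≠ ∞ := ne_top_of_le_ne_top hr hpr
  have hr_ne : r ≠ 0 := (hp.bot_lt.trans_le hpr).ne'
  have p_pos : 0 < p.toReal := ENNReal.toReal_pos hp hp_top
  have r_pos : 0 < r.toReal := ENNReal.toReal_pos hr_ne hr
  have p_le_r : p.toReal ≤ r.toReal := ENNReal.toReal_mono hr hpr
  rw [eLpNorm_eq_lintegral_rpow_enorm_toReal hr_ne hr,
    eLpNorm_eq_lintegral_rpow_enorm_toReal hp hp_top, one_div, ENNReal.rpow_inv_le_iff r_pos,
    ENNReal.mul_rpow_of_nonneg _ _ r_pos.le, ← ENNReal.rpow_mul, ← ENNReal.rpow_mul,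
    ← ENNReal.rpow_mul, ENNReal.toReal_div]
  have rest_exponent : (1 - p.toReal / r.toReal) * r.toReal = r.toReal - p.toReal := by field_simp
  have base_exponent : 1 / p.toReal * (p.toReal / r.toReal) * r.toReal = 1 := by field_simp
  rw [← mul_assoc, rest_exponent, base_exponent, ENNReal.rpow_one]
  rw [← lintegral_const_mul'' _ (hf.enorm.pow_const _)]
  refine lintegral_mono_ae ((enorm_ae_le_eLpNormEssSup f μ).mono fun x hx => ?_)
  calc ‖f x‖ₑ ^ r.toReal = ‖f x‖ₑ ^ (r.toReal - p.toReal) * ‖f x‖ₑ ^ p.toReal := by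
        rw [← ENNReal.rpow_add_of_nonneg _ _ (sub_nonneg.2 p_le_r) p_pos.le, sub_add_cancel]
    _ ≤ eLpNorm f ∞ μ ^ (r.toReal - p.toReal) * ‖f x‖ₑ ^ p.toReal := by
        rw [eLpNorm_exponent_top]
        gcongr

end LpSpaces

section SequenceNorms

variable {q : ℝ≥0∞}

theorem eLpNorm_count_comp_le {α β : Type*} [MeasurableSpace α] [DiscreteMeasurableSpace α]
    [MeasurableSpace β] [DiscreteMeasurableSpace β] {f : α → β} (hf : f.Injective)
    (a : β → ℝ≥0∞) : eLpNorm (a ∘ f) q .count ≤ eLpNorm a q .count := by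
  have hemb : MeasurableEmbedding f := ⟨hf, .of_discrete, fun _ _ => .of_discrete⟩
  rw [← hemb.eLpNorm_map_measure]
  refine eLpNorm_mono_measure a (Measure.le_iff.2 fun t _ => ?_)
  rw [hemb.map_apply, Measure.count_apply .of_discrete, Measure.count_apply .of_discrete]
  rw [← hf.encard_image]
  gcongr
  exact Set.image_preimage_subset f t

theorem eLpNorm_count_mul_add_mul_le (hq : 1 ≤ q) (c d : ℝ≥0∞) (a b : ℕ → ℝ≥0∞) :
    eLpNorm (fun k => c * a k + d * b k) q .count ≤
      c * eLpNorm a q .count + d * eLpNorm b q .count :=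
  (eLpNorm_add_le .of_discrete .of_discrete hq).trans <| add_le_add
    (eLpNorm_le_mul_eLpNorm_of_ae_le_mul'' q .of_discrete (.of_forall fun k => by simp))
    (eLpNorm_le_mul_eLpNorm_of_ae_le_mul'' q .of_discrete (.of_forall fun k => by simp))

theorem eLpNorm_count_tsum_mul_comp_add_le (hq : 1 ≤ q) (w a : ℕ → ℝ≥0∞) :
    eLpNorm (fun k => ∑' j, w j * a (k + j)) q .count ≤ (∑' j, w j) * eLpNorm a q .count :=
  calc eLpNorm (fun k => ∑' j, w j * a (k + j)) q .count
      ≤ ∑' j, eLpNorm (fun k => w j * a (k + j)) q .count :=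
        eLpNorm_tsum_le hq fun _ => .of_discrete
    _ ≤ ∑' j, w j * eLpNorm a q .count := by
        gcongr with j
        calc eLpNorm (fun k => w j * a (k + j)) q .count
            ≤ w j * eLpNorm (a ∘ (· + j)) q .count :=
              eLpNorm_le_mul_eLpNorm_of_ae_le_mul'' q (.of_discrete) (.of_forall fun k => by simp)
          _ ≤ w j * eLpNorm a q .count := by
              gcongr
              exact eLpNorm_count_comp_le (add_left_injective j) a
    _ = (∑' j, w j) * eLpNorm a q .count := ENNReal.tsum_mul_right

theorem eLpNorm_count_le_zero_add_comp_succ (hq : 1 ≤ q) (a : ℕ → ℝ≥0∞) :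
    eLpNorm a q .count ≤ a 0 + eLpNorm (fun k => a (k + 1)) q .count := by
  obtain rfl | hq_top := eq_or_ne q ∞
  · simp only [eLpNorm_exponent_top, eLpNormEssSup_count, enorm_eq_self]
    refine iSup_le fun k => ?_
    cases k with
    | zero => exact le_self_add
    | succ k => exact (le_iSup (fun i => a (i + 1)) k).trans le_add_self
  have q_ne : q ≠ 0 := (zero_lt_one.trans_le hq).ne'
  have one_le_q : 1 ≤ q.toReal := by simpa using ENNReal.toReal_mono hq_top hq
  simp only [eLpNorm_eq_lintegral_rpow_enorm_toReal q_ne hq_top, lintegral_count, enorm_eq_self]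
  rw [tsum_eq_zero_add' ENNReal.summable]
  set S := ∑' k, a (k + 1) ^ q.toReal
  calc (a 0 ^ q.toReal + S) ^ (1 / q.toReal)
      = (a 0 ^ q.toReal + (S ^ (1 / q.toReal)) ^ q.toReal) ^ (1 / q.toReal) := by
        rw [← ENNReal.rpow_mul S, one_div_mul_cancel (by positivity), ENNReal.rpow_one]
    _ ≤ a 0 + S ^ (1 / q.toReal) := ENNReal.rpow_add_rpow_le_add _ _ one_le_q

theorem tsum_two_rpow_neg_nat_mul_ne_top {s : ℝ} (hs : 0 < s) :
    ∑' j : ℕ, (2 : ℝ≥0∞) ^ (-(j * s)) ≠ ∞ := by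
  have pow_eq (j : ℕ) : (2 : ℝ≥0∞) ^ (-(j * s)) = ((2 : ℝ≥0∞) ^ (-s)) ^ j := by
    rw [← ENNReal.rpow_natCast, ← ENNReal.rpow_mul]
    ring_nf
  have ratio_lt_one : (2 : ℝ≥0∞) ^ (-s) < 1 :=
    ENNReal.rpow_lt_one_of_one_lt_of_neg ENNReal.one_lt_two (neg_neg_of_pos hs)
  simpa only [pow_eq, ENNReal.tsum_geometric, ENNReal.inv_ne_top] using
    (tsub_pos_of_lt ratio_lt_one).ne'

end SequenceNorms

section Young

theorem lintegral_mul_rpow_le {α : Type*} [MeasurableSpace α] {μ : Measure α} {p : ℝ} (hp : 1 ≤ p)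
    {f g : α → ℝ≥0∞} (hf : AEMeasurable f μ) (hg : AEMeasurable g μ) :
    (∫⁻ x, f x * g x ∂μ) ^ p ≤ (∫⁻ x, f x ∂μ) ^ (p - 1) * ∫⁻ x, f x * g x ^ p ∂μ := by
  have p_pos : 0 < p := zero_lt_one.trans_le hp
  have inv_le_one : p⁻¹ ≤ 1 := inv_le_one_of_one_le₀ hp
  have split (x : α) : f x * g x = f x ^ (1 - p⁻¹) * (f x * g x ^ p) ^ p⁻¹ := by
    rw [ENNReal.mul_rpow_of_nonneg _ _ (by positivity), ENNReal.rpow_rpow_inv p_pos.ne',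
      ← mul_assoc, ← ENNReal.rpow_add_of_nonneg _ _ (sub_nonneg.2 inv_le_one) (by positivity),
      sub_add_cancel, ENNReal.rpow_one]
  calc (∫⁻ x, f x * g x ∂μ) ^ p
      ≤ ((∫⁻ x, f x ∂μ) ^ (1 - p⁻¹) * (∫⁻ x, f x * g x ^ p ∂μ) ^ p⁻¹) ^ p := by
        simp only [split]
        gcongr
        exact ENNReal.lintegral_mul_norm_pow_le hf (hf.mul (hg.pow_const p))
          (sub_nonneg.2 inv_le_one) (by positivity) (sub_add_cancel _ _)
    _ = (∫⁻ x, f x ∂μ) ^ (p - 1) * ∫⁻ x, f x * g x ^ p ∂μ := by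
        rw [ENNReal.mul_rpow_of_nonneg _ _ p_pos.le, ENNReal.rpow_inv_rpow p_pos.ne',
          ← ENNReal.rpow_mul, sub_mul, one_mul, inv_mul_cancel₀ p_pos.ne']

variable {G : Type*} [MeasurableSpace G] {μ : Measure G}

theorem lintegral_lconvolution_rpow_le [AddGroup G] [MeasurableAdd₂ G] [MeasurableNeg G] [SFinite μ]
    [μ.IsAddLeftInvariant] {p : ℝ} (hp : 1 ≤ p) {f g : G → ℝ≥0∞} (hf : AEMeasurable f μ)
    (hg : AEMeasurable g μ) :
    ∫⁻ x, (f ⋆ₗ[μ] g) x ^ p ∂μ ≤ (∫⁻ x, f x ∂μ) ^ p * ∫⁻ x, g x ^ p ∂μ := by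
  have hfg : AEMeasurable (f ⋆ₗ[μ] fun y => g y ^ p) μ := by fun_prop
  have jensen (x : G) : (f ⋆ₗ[μ] g) x ^ p ≤
      (∫⁻ y, f y ∂μ) ^ (p - 1) * (f ⋆ₗ[μ] fun y => g y ^ p) x :=
    lintegral_mul_rpow_le hp hf (by fun_prop)
  have tonelli : ∫⁻ x, (f ⋆ₗ[μ] fun y => g y ^ p) x ∂μ = (∫⁻ y, f y ∂μ) * ∫⁻ x, g x ^ p ∂μ := by
    simp only [lconvolution_def]
    rw [lintegral_lintegral_swap (by fun_prop)]
    rw [← lintegral_mul_const'' _ hf]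
    refine lintegral_congr fun y => ?_
    have hg_add : AEMeasurable (fun x => g (-y + x)) μ :=
      hg.comp_quasiMeasurePreserving (measurePreserving_add_left μ (-y)).quasiMeasurePreserving
    rw [lintegral_const_mul'' _ (hg_add.pow_const p), lintegral_add_left_eq_self (g · ^ p)]
  calc ∫⁻ x, (f ⋆ₗ[μ] g) x ^ p ∂μ
      ≤ (∫⁻ y, f y ∂μ) ^ (p - 1) * ((∫⁻ y, f y ∂μ) * ∫⁻ x, g x ^ p ∂μ) := by
        rw [← tonelli, ← lintegral_const_mul'' _ hfg]
        exact lintegral_mono jensen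
    _ = (∫⁻ x, f x ∂μ) ^ p * ∫⁻ x, g x ^ p ∂μ := by
        rw [← mul_assoc]
        nth_rw 2 [← ENNReal.rpow_one (∫⁻ y, f y ∂μ)]
        rw [← ENNReal.rpow_add_of_nonneg _ _ (sub_nonneg.2 hp) zero_le_one, sub_add_cancel]

variable [AddCommGroup G] {𝕜 E E' F : Type*} [NontriviallyNormedField 𝕜] [NormedAddCommGroup E]
  [NormedAddCommGroup E'] [NormedAddCommGroup F] [NormedSpace 𝕜 E] [NormedSpace 𝕜 E']
  [NormedSpace 𝕜 F] [NormedSpace ℝ F]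
  (L : E →L[𝕜] E' →L[𝕜] F)

theorem enorm_convolution_le_lconvolution (f : G → E) (g : G → E') (x : G) :
    ‖(f ⋆[L, μ] g) x‖ₑ ≤ ‖L‖ₑ * ((‖f ·‖ₑ) ⋆ₗ[μ] (‖g ·‖ₑ)) x := by
  rw [lconvolution_def, ← lintegral_const_mul' _ _ enorm_ne_top]
  refine (enorm_integral_le_lintegral_enorm _).trans (lintegral_mono fun t => ?_)
  rw [neg_add_eq_sub, ← mul_assoc]
  exact L.le_opENorm₂ _ _

variable [MeasurableAdd₂ G] [MeasurableNeg G] [μ.IsAddLeftInvariant] {f : G → E} {g : G → E'}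

theorem enorm_convolution_le_eLpNorm_mul_eLpNorm [μ.IsNegInvariant] (p q : ℝ≥0∞)
    [p.HolderConjugate q] (hf : AEStronglyMeasurable f μ) (hg : AEStronglyMeasurable g μ) (x : G) :
    ‖(f ⋆[L, μ] g) x‖ₑ ≤ ‖L‖ₑ * eLpNorm f p μ * eLpNorm g q μ := by
  have hmp := Measure.measurePreserving_sub_left μ x
  calc ‖(f ⋆[L, μ] g) x‖ₑ ≤ ∫⁻ t, ‖L (f t) (g (x - t))‖ₑ ∂μ := enorm_integral_le_lintegral_enorm _
    _ = eLpNorm (fun t => L (f t) ((g ∘ (x - ·)) t)) 1 μ := eLpNorm_one_eq_lintegral_enorm.symm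
    _ ≤ ‖L‖ₑ * eLpNorm f p μ * eLpNorm (g ∘ (x - ·)) q μ :=
        eLpNorm_le_eLpNorm_mul_eLpNorm'_of_norm hf (hg.comp_measurePreserving hmp) (L · ·) ‖L‖₊
          (.of_forall fun t => L.le_opNorm₂ _ _)
    _ = ‖L‖ₑ * eLpNorm f p μ * eLpNorm g q μ := by
        rw [eLpNorm_comp_measurePreserving hg hmp]

theorem eLpNorm_convolution_le [SFinite μ] [μ.IsNegInvariant] {p : ℝ≥0∞} (hp : 1 ≤ p)
    (hf : AEStronglyMeasurable f μ) (hg : AEStronglyMeasurable g μ) :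
    eLpNorm (f ⋆[L, μ] g) p μ ≤ ‖L‖ₑ * eLpNorm f 1 μ * eLpNorm g p μ := by
  obtain rfl | hp_top := eq_or_ne p ∞
  · exact eLpNormEssSup_le_of_ae_enorm_bound
      (.of_forall (enorm_convolution_le_eLpNorm_mul_eLpNorm L 1 ∞ hf hg))
  have p_ne : p ≠ 0 := (zero_lt_one.trans_le hp).ne'
  have one_le_p : 1 ≤ p.toReal := by simpa using ENNReal.toReal_mono hp_top hp
  have p_pos : 0 < p.toReal := by positivity
  calc eLpNorm (f ⋆[L, μ] g) p μ
      ≤ ‖L‖ₑ * eLpNorm ((‖f ·‖ₑ) ⋆ₗ[μ] (‖g ·‖ₑ)) p μ :=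
        eLpNorm_le_mul_eLpNorm_of_ae_le_mul'' p
          (aemeasurable_lconvolution hf.enorm hg.enorm).aestronglyMeasurable
          (.of_forall (enorm_convolution_le_lconvolution L f g))
    _ ≤ ‖L‖ₑ * (eLpNorm f 1 μ * eLpNorm g p μ) := by
        gcongr
        simp only [eLpNorm_one_eq_lintegral_enorm,
          eLpNorm_eq_lintegral_rpow_enorm_toReal p_ne hp_top, enorm_eq_self, one_div]
        rw [ENNReal.rpow_inv_le_iff p_pos, ENNReal.mul_rpow_of_nonneg _ _ p_pos.le,
          ENNReal.rpow_inv_rpow p_pos.ne']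
        exact lintegral_lconvolution_rpow_le one_le_p hf.enorm hg.enorm
    _ = ‖L‖ₑ * eLpNorm f 1 μ * eLpNorm g p μ := (mul_assoc _ _ _).symm

end Young

section Scaling

theorem eLpNorm_comp_smul {E F : Type*} [NormedAddCommGroup E] [NormedSpace ℝ E]
    [FiniteDimensional ℝ E] [MeasurableSpace E] [BorelSpace E] (μ : Measure E) [μ.IsAddHaarMeasure]
    [NormedAddCommGroup F] (f : E → F) {c : ℝ} (hc : c ≠ 0) (p : ℝ≥0∞) :
    eLpNorm (fun x => f (c • x)) p μ =
      ENNReal.ofReal |(c ^ Module.finrank ℝ E)⁻¹| ^ (1 / p).toReal * eLpNorm f p μ := by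
  have hemb : MeasurableEmbedding (c • · : E → E) :=
    (Homeomorph.smulOfNeZero c hc).measurableEmbedding
  calc eLpNorm (f ∘ (c • ·)) p μ = eLpNorm f p (μ.map (c • ·)) := hemb.eLpNorm_map_measure.symm
    _ = _ := by
        rw [Measure.map_addHaar_smul μ hc, eLpNorm_smul_measure_of_ne_zero (by positivity),
          smul_eq_mul]

theorem ennreal_ofReal_two_zpow (m : ℤ) : ENNReal.ofReal ((2 : ℝ) ^ m) = (2 : ℝ≥0∞) ^ (m : ℝ) := by
  rw [← Real.rpow_intCast, ← ENNReal.ofReal_rpow_of_pos two_pos, ENNReal.ofReal_ofNat]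

theorem eLpNorm_lpKernel (φ : 𝓢(Rn n, ℝ)) (j : ℤ) (p : ℝ≥0∞) :
    eLpNorm (lpKernel φ j) p volume =
      (2 : ℝ≥0∞) ^ (j * (n * (1 - p⁻¹.toReal))) * eLpNorm φ p volume := by
  have scale : ENNReal.ofReal |(((2 : ℝ) ^ j) ^ Module.finrank ℝ (Rn n))⁻¹| =
      (2 : ℝ≥0∞) ^ (-(j * n) : ℝ) := by
    rw [abs_of_pos (by positivity), finrank_euclideanSpace_fin, ← zpow_natCast, ← zpow_mul,
      ← zpow_neg, ennreal_ofReal_two_zpow]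
    push_cast
    rfl
  calc eLpNorm (lpKernel φ j) p volume
      = ENNReal.ofReal (2 ^ (j * (n : ℤ))) * eLpNorm (fun x => φ ((2 : ℝ) ^ j • x)) p volume := by
        rw [← Real.enorm_of_nonneg (by positivity)]
        exact eLpNorm_const_smul ((2 : ℝ) ^ (j * (n : ℤ))) (fun x => φ ((2 : ℝ) ^ j • x)) p volume
    _ = 2 ^ (j * (n * (1 - p⁻¹.toReal))) * eLpNorm φ p volume := by
        rw [eLpNorm_comp_smul volume φ (by positivity), scale, ennreal_ofReal_two_zpow, ← mul_assoc,
          ← ENNReal.rpow_mul, ← ENNReal.rpow_add _ _ two_ne_zero ENNReal.ofNat_ne_top, one_div]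
        push_cast
        ring_nf

end Scaling

section SchwartzFourier

/-- A real Schwartz function regarded as a complex one, for access to the Fourier transform on
complex Schwartz space. -/
def complexify (f : 𝓢(Rn n, ℝ)) : 𝓢(Rn n, ℂ) :=
  f.postcompCLM Complex.ofRealCLM

theorem ftC_eq_fourier_complexify (f : 𝓢(Rn n, ℝ)) : ftC f = 𝓕 (complexify f) := rfl

theorem ftC_add (f g : 𝓢(Rn n, ℝ)) : ftC (f + g) = ftC f + ftC g := by
  simp only [ftC_eq_fourier_complexify, complexify, map_add, FourierTransform.fourier_add]
  rfl

theorem ftC_zero : ftC (0 : 𝓢(Rn n, ℝ)) = 0 := by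
  simpa using ftC_add (0 : 𝓢(Rn n, ℝ)) 0

theorem ftC_injective : Function.Injective (ftC : 𝓢(Rn n, ℝ) → Rn n → ℂ) := fun f g h => by
  have complexify_eq : complexify f = complexify g := by
    simpa using congrArg 𝓕⁻ (DFunLike.coe_injective h : 𝓕 (complexify f) = 𝓕 (complexify g))
  ext x
  exact Complex.ofReal_injective (DFunLike.congr_fun complexify_eq x)

theorem ftC_zero_apply_eq_integral (f : 𝓢(Rn n, ℝ)) : ftC f 0 = ∫ x, f x := by
  simp [ftC, Real.fourier_eq, integral_complex_ofReal]

/-- The convolution of two real Schwartz functions, as a Schwartz function. It is the real part of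
the convolution of their complexifications, whose Fourier transform Mathlib computes. -/
def schwartzConvolution (f g : 𝓢(Rn n, ℝ)) : 𝓢(Rn n, ℝ) :=
  (SchwartzMap.convolution (.mul ℂ ℂ) (complexify f) (complexify g)).postcompCLM Complex.reCLM

theorem convolution_complexify (f g : 𝓢(Rn n, ℝ)) (x : Rn n) :
    (complexify f ⋆[.mul ℂ ℂ] complexify g) x = (f ⋆[.mul ℝ ℝ] g) x := by
  simp only [convolution_def, ← integral_complex_ofReal]
  simp [complexify]

theorem coe_schwartzConvolution (f g : 𝓢(Rn n, ℝ)) :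
    ⇑(schwartzConvolution f g) = f ⋆[.mul ℝ ℝ] g := by
  ext x
  simp [schwartzConvolution, SchwartzMap.convolution_apply, convolution_complexify]

theorem complexify_schwartzConvolution (f g : 𝓢(Rn n, ℝ)) :
    complexify (schwartzConvolution f g) =
      SchwartzMap.convolution (.mul ℂ ℂ) (complexify f) (complexify g) := by
  ext x
  rw [SchwartzMap.convolution_apply, convolution_complexify, ← coe_schwartzConvolution]
  rfl

theorem ftC_schwartzConvolution (f g : 𝓢(Rn n, ℝ)) (ξ : Rn n) :
    ftC (schwartzConvolution f g) ξ = ftC f ξ * ftC g ξ := by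
  rw [ftC_eq_fourier_complexify, complexify_schwartzConvolution, SchwartzMap.fourier_convolution]
  rfl

/-- The pointwise product of two real Schwartz functions, as a Schwartz function. -/
def schwartzMul (f g : 𝓢(Rn n, ℝ)) : 𝓢(Rn n, ℝ) :=
  SchwartzMap.pairing (.mul ℝ ℝ) f g

@[simp]
theorem schwartzMul_apply (f g : 𝓢(Rn n, ℝ)) (x : Rn n) : schwartzMul f g x = f x * g x := rfl

theorem ftC_schwartzMul (f g : 𝓢(Rn n, ℝ)) (ξ : Rn n) :
    ftC (schwartzMul f g) ξ = ∫ η, ftC f η * ftC g (ξ - η) := by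
  have fourierInv_eq (F : 𝓢(Rn n, ℂ)) (x : Rn n) : 𝓕⁻ F x = 𝓕 F (-x) := by
    rw [SchwartzMap.fourierInv_apply_eq]
    rfl
  have fourierInv_conv :
      𝓕⁻ (SchwartzMap.convolution (.mul ℂ ℂ) (𝓕 (complexify f)) (𝓕 (complexify g))) =
        complexify (schwartzMul f g) := by
    ext x
    rw [fourierInv_eq, SchwartzMap.fourier_convolution, SchwartzMap.pairing_apply_apply,
      ← fourierInv_eq, ← fourierInv_eq]
    simp [complexify]
  rw [ftC_eq_fourier_complexify, ← fourierInv_conv, FourierTransform.fourier_fourierInv_eq,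
    SchwartzMap.convolution_apply]
  rfl

theorem ftC_schwartzMul_eq_zero {f g : 𝓢(Rn n, ℝ)} {R R' : ℝ}
    (hf : ∀ ξ, R ≤ ‖ξ‖ → ftC f ξ = 0) (hg : ∀ ξ, R' ≤ ‖ξ‖ → ftC g ξ = 0) {ξ : Rn n}
    (hξ : R + R' ≤ ‖ξ‖) : ftC (schwartzMul f g) ξ = 0 := by
  rw [ftC_schwartzMul]
  refine integral_eq_zero_of_ae (.of_forall fun η => mul_eq_zero.2 ?_)
  obtain hη | hη := le_or_gt R ‖η‖
  · exact .inl (hf η hη)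
  · exact .inr (hg _ (by linarith [norm_sub_norm_le ξ η]))

end SchwartzFourier

section FrequencyProjections

/-- The kernel `lpKernel φ j` as a Schwartz function. -/
def schwartzKernel (φ : 𝓢(Rn n, ℝ)) (j : ℤ) : 𝓢(Rn n, ℝ) :=
  (2 : ℝ) ^ (j * (n : ℤ)) • SchwartzMap.compCLMOfContinuousLinearEquiv ℝ
    (ContinuousLinearEquiv.smulLeft (Units.mk0 ((2 : ℝ) ^ j) (by positivity))) φ

theorem coe_schwartzKernel (φ : 𝓢(Rn n, ℝ)) (j : ℤ) : ⇑(schwartzKernel φ j) = lpKernel φ j := rfl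

theorem integral_lpKernel_smul {E : Type*} [NormedAddCommGroup E] [NormedSpace ℝ E]
    (φ : 𝓢(Rn n, ℝ)) (j : ℤ) (F : Rn n → E) :
    ∫ x, lpKernel φ j x • F x = ∫ y, φ y • F ((2 : ℝ) ^ (-j) • y) := by
  have integrand_eq (x : Rn n) : lpKernel φ j x • F x = (2 : ℝ) ^ (j * (n : ℤ)) •
      (φ ((2 : ℝ) ^ j • x) • F ((2 : ℝ) ^ (-j) • (2 : ℝ) ^ j • x)) := by
    rw [smul_smul ((2 : ℝ) ^ (-j)), ← zpow_add₀ two_ne_zero, neg_add_cancel, zpow_zero, one_smul,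
      lpKernel, mul_smul]
  have scale_mul_jacobian : (2 : ℝ) ^ (j * (n : ℤ)) * |(((2 : ℝ) ^ j) ^ n)⁻¹| = 1 := by
    rw [abs_of_pos (by positivity), zpow_mul, zpow_natCast, mul_inv_cancel₀ (by positivity)]
  rw [integral_congr_ae (.of_forall integrand_eq), integral_smul,
    Measure.integral_comp_smul volume (fun y : Rn n => φ y • F ((2 : ℝ) ^ (-j) • y)),
    finrank_euclideanSpace_fin, smul_smul, scale_mul_jacobian, one_smul]

theorem ftC_schwartzKernel (φ : 𝓢(Rn n, ℝ)) (j : ℤ) (ξ : Rn n) :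
    ftC (schwartzKernel φ j) ξ = ftC φ ((2 : ℝ) ^ (-j) • ξ) := by
  have fourier_integrand (c : ℝ) (x : Rn n) (η : Rn n) :
      𝐞 (-inner ℝ x η) • (c : ℂ) = c • (𝐞 (-inner ℝ x η) : ℂ) := by
    rw [Circle.smul_def, smul_eq_mul, mul_comm, Complex.real_smul]
  simp only [ftC, Real.fourier_eq, fourier_integrand, coe_schwartzKernel]
  rw [integral_lpKernel_smul φ j (fun x => (𝐞 (-inner ℝ x ξ) : ℂ))]
  simp only [real_inner_smul_left, real_inner_smul_right]

/-- The frequency projection `lpProj φ j u` of a Schwartz function, as a Schwartz function. Besides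
the blocks `Δ_j u`, for which `φ` is the Littlewood–Paley function, it covers the low-frequency
cutoffs `S_j u`, for which `φ` is the low-frequency piece `Ψ`. -/
def schwartzProj (φ : 𝓢(Rn n, ℝ)) (j : ℤ) (u : 𝓢(Rn n, ℝ)) : 𝓢(Rn n, ℝ) :=
  schwartzConvolution (schwartzKernel φ j) u

theorem coe_schwartzProj (φ : 𝓢(Rn n, ℝ)) (j : ℤ) (u : 𝓢(Rn n, ℝ)) :
    ⇑(schwartzProj φ j u) = lpProj φ j u :=
  coe_schwartzConvolution _ _

theorem ftC_schwartzProj (φ : 𝓢(Rn n, ℝ)) (j : ℤ) (u : 𝓢(Rn n, ℝ)) (ξ : Rn n) :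
    ftC (schwartzProj φ j u) ξ = ftC φ ((2 : ℝ) ^ (-j) • ξ) * ftC u ξ := by
  rw [schwartzProj, ftC_schwartzConvolution, ftC_schwartzKernel]

theorem schwartzProj_add (φ : 𝓢(Rn n, ℝ)) (j : ℤ) (u v : 𝓢(Rn n, ℝ)) :
    schwartzProj φ j (u + v) = schwartzProj φ j u + schwartzProj φ j v :=
  ftC_injective (by ext ξ; simp only [ftC_schwartzProj, ftC_add, Pi.add_apply, mul_add])

end FrequencyProjections

section LittlewoodPaley

variable {ψ₀ Ψ φ : 𝓢(Rn n, ℝ)} {ξ : Rn n}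

theorem norm_two_zpow_smul (j : ℤ) (ξ : Rn n) : ‖(2 : ℝ) ^ j • ξ‖ = 2 ^ j * ‖ξ‖ := by
  rw [norm_smul, Real.norm_of_nonneg (by positivity)]

theorem IsLPF.ftC_eq_zero_of_norm_le (hψ : IsLPF n ψ₀) (hξ : ‖ξ‖ ≤ 1 / 2) : ftC ψ₀ ξ = 0 :=
  of_not_not fun h => (hψ.ft_supp ξ h).1.not_ge hξ

theorem IsLPF.ftC_eq_zero_of_le_norm (hψ : IsLPF n ψ₀) (hξ : 2 ≤ ‖ξ‖) : ftC ψ₀ ξ = 0 :=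
  of_not_not fun h => (hψ.ft_supp ξ h).2.not_ge hξ

theorem IsLPF.summable_ftC (hψ : IsLPF n ψ₀) (ξ : Rn n) :
    Summable fun k : ℕ => ftC ψ₀ ((2 : ℝ) ^ (-(k : ℤ)) • ξ) := by
  obtain rfl | hξ := eq_or_ne ξ 0
  · simp only [smul_zero, hψ.ftC_eq_zero_of_norm_le (by simp : ‖(0 : Rn n)‖ ≤ 1 / 2), summable_zero]
  · exact (hψ.ft_sum ξ hξ).summable.comp_injective (i := ((↑) : ℕ → ℤ)) Nat.cast_injective

theorem IsLowPiece.ftC_eq_one (hΨ : IsLowPiece ψ₀ Ψ) (hψ : IsLPF n ψ₀) (hξ : ‖ξ‖ ≤ 1 / 2) :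
    ftC Ψ ξ = 1 := by
  have block_eq_zero (k : ℕ) : ftC ψ₀ ((2 : ℝ) ^ (-(k : ℤ)) • ξ) = 0 := by
    refine hψ.ftC_eq_zero_of_norm_le ?_
    rw [norm_two_zpow_smul]
    exact (mul_le_of_le_one_left (norm_nonneg ξ)
      (zpow_le_one_of_nonpos₀ one_le_two (by simp))).trans hξ
  rw [hΨ, tsum_congr block_eq_zero, tsum_zero, sub_zero]

theorem IsLowPiece.ftC_eq_zero (hΨ : IsLowPiece ψ₀ Ψ) (hψ : IsLPF n ψ₀) (hξ : 1 ≤ ‖ξ‖) :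
    ftC Ψ ξ = 0 := by
  have negative_block_eq_zero (j : ℤ) (hj : j ∉ Set.range ((↑) : ℕ → ℤ)) :
      ftC ψ₀ ((2 : ℝ) ^ (-j) • ξ) = 0 := by
    have hj_neg : j < 0 := by
      by_contra! hj_nonneg
      exact hj ⟨j.toNat, Int.toNat_of_nonneg hj_nonneg⟩
    refine hψ.ftC_eq_zero_of_le_norm ?_
    calc (2 : ℝ) = 2 ^ (1 : ℤ) * 1 := by norm_num
      _ ≤ 2 ^ (-j) * ‖ξ‖ := by gcongr <;> [norm_num; lia]
      _ = ‖(2 : ℝ) ^ (-j) • ξ‖ := (norm_two_zpow_smul _ _).symm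
  have hasSum_one := (Function.Injective.hasSum_iff Nat.cast_injective negative_block_eq_zero).2
    (hψ.ft_sum ξ (norm_pos_iff.1 (one_pos.trans_le hξ)))
  rw [hΨ, sub_eq_zero]
  exact hasSum_one.tsum_eq.symm

theorem IsLowPiece.ftC_half_smul (hΨ : IsLowPiece ψ₀ Ψ) (hψ : IsLPF n ψ₀) (ξ : Rn n) :
    ftC Ψ ((2 : ℝ)⁻¹ • ξ) = ftC Ψ ξ + ftC ψ₀ ξ := by
  have block_half_smul (k : ℕ) : ftC ψ₀ ((2 : ℝ) ^ (-(k : ℤ)) • (2 : ℝ)⁻¹ • ξ) =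
      ftC ψ₀ ((2 : ℝ) ^ (-((k + 1 : ℕ) : ℤ)) • ξ) := by
    rw [smul_smul, ← zpow_neg_one, ← zpow_add₀ two_ne_zero, Nat.cast_succ, neg_add]
  rw [hΨ, hΨ, (hψ.summable_ftC ξ).tsum_eq_zero_add, tsum_congr block_half_smul, Nat.cast_zero,
    neg_zero, zpow_zero, one_smul]
  ring

theorem IsLowPiece.integral_eq_one (hΨ : IsLowPiece ψ₀ Ψ) (hψ : IsLPF n ψ₀) : ∫ x, Ψ x = 1 := by
  exact_mod_cast (ftC_zero_apply_eq_integral Ψ).symm.trans (hΨ.ftC_eq_one hψ (by simp))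

theorem IsLowPiece.schwartzProj_succ (hΨ : IsLowPiece ψ₀ Ψ) (hψ : IsLPF n ψ₀) (j : ℤ)
    (u : 𝓢(Rn n, ℝ)) : schwartzProj Ψ (j + 1) u = schwartzProj Ψ j u + schwartzProj ψ₀ j u := by
  refine ftC_injective (funext fun ξ => ?_)
  rw [ftC_add, Pi.add_apply, ftC_schwartzProj, ftC_schwartzProj, ftC_schwartzProj, neg_add_rev,
    zpow_add₀ two_ne_zero, zpow_neg_one, mul_smul, hΨ.ftC_half_smul hψ, add_mul]

theorem IsLowPiece.schwartzProj_add_natCast (hΨ : IsLowPiece ψ₀ Ψ) (hψ : IsLPF n ψ₀) (j : ℤ)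
    (N : ℕ) (u : 𝓢(Rn n, ℝ)) : schwartzProj Ψ (j + N) u =
      schwartzProj Ψ j u + ∑ i ∈ Finset.range N, schwartzProj ψ₀ (j + i) u := by
  induction N with
  | zero => simp
  | succ N ih =>
    rw [Nat.cast_succ, ← add_assoc, hΨ.schwartzProj_succ hψ, ih, Finset.sum_range_succ, add_assoc]

theorem IsLowPiece.schwartzProj_add_two_schwartzProj (hΨ : IsLowPiece ψ₀ Ψ) (hψ : IsLPF n ψ₀)
    (hφ : ∀ ξ, 2 ≤ ‖ξ‖ → ftC φ ξ = 0) (j : ℤ) (u : 𝓢(Rn n, ℝ)) :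
    schwartzProj Ψ (j + 2) (schwartzProj φ j u) = schwartzProj φ j u := by
  refine ftC_injective (funext fun ξ => ?_)
  simp only [ftC_schwartzProj]
  obtain hξ | hξ := le_or_gt 2 ‖(2 : ℝ) ^ (-j) • ξ‖
  · rw [hφ _ hξ, zero_mul, mul_zero]
  · have four_smul : (2 : ℝ) ^ (-(j + 2)) * 4 = 2 ^ (-j) := by
      rw [neg_add, zpow_add₀ two_ne_zero, mul_assoc]
      norm_num
    rw [hΨ.ftC_eq_one hψ, one_mul]
    rw [norm_two_zpow_smul] at hξ ⊢
    linarith [congrArg (· * ‖ξ‖) four_smul]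

theorem IsLowPiece.schwartzProj_schwartzMul_eq_zero (hΨ : IsLowPiece ψ₀ Ψ) (hψ : IsLPF n ψ₀)
    (k : ℤ) (u v : 𝓢(Rn n, ℝ)) :
    schwartzProj ψ₀ (k + 2) (schwartzMul (schwartzProj Ψ k u) (schwartzProj Ψ k v)) = 0 := by
  have ftC_low_eq_zero (w : 𝓢(Rn n, ℝ)) (ξ : Rn n) (hξ : 2 ^ k ≤ ‖ξ‖) :
      ftC (schwartzProj Ψ k w) ξ = 0 := by
    rw [ftC_schwartzProj, hΨ.ftC_eq_zero hψ, zero_mul]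
    rwa [norm_two_zpow_smul, zpow_neg, inv_mul_eq_div, one_le_div (by positivity)]
  -- The product has frequencies at most `2 ^ (k + 1)`, the inner radius of the block `k + 2`.
  refine ftC_injective (funext fun ξ => ?_)
  rw [ftC_schwartzProj, ftC_zero, Pi.zero_apply, mul_eq_zero]
  obtain hξ | hξ := le_or_gt ((2 : ℝ) ^ k + 2 ^ k) ‖ξ‖
  · exact .inr (ftC_schwartzMul_eq_zero (ftC_low_eq_zero u) (ftC_low_eq_zero v) hξ)
  · refine .inl (hψ.ftC_eq_zero_of_norm_le ?_)
    rw [norm_two_zpow_smul, zpow_neg, inv_mul_le_iff₀ (by positivity), zpow_add₀ two_ne_zero]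
    linarith

theorem tendsto_lpProj_atTop (hφ : ∫ x, φ x = 1) (u : 𝓢(Rn n, ℝ)) (x : Rn n) :
    Tendsto (fun j : ℕ => lpProj φ j u x) atTop (𝓝 (u x)) := by
  have lpProj_eq_integral (j : ℕ) :
      lpProj φ j u x = ∫ y, φ y * u (x - (2 : ℝ) ^ (-(j : ℤ)) • y) :=
    integral_lpKernel_smul φ j fun y => u (x - y)
  have integral_eq : u x = ∫ y, φ y * u (x - (0 : ℝ) • y) := by
    simp only [zero_smul, sub_zero, integral_mul_const, hφ, one_mul]
  have tendsto_scale : Tendsto (fun j : ℕ => (2 : ℝ) ^ (-(j : ℤ))) atTop (𝓝 0) := by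
    simpa only [zpow_neg, zpow_natCast] using!
      (tendsto_pow_atTop_atTop_of_one_lt one_lt_two).inv_tendsto_atTop
  have hu := u.continuous
  have hφ_cont := φ.continuous
  simp only [lpProj_eq_integral]
  rw [integral_eq]
  refine tendsto_integral_filter_of_dominated_convergence
    (fun y => ‖φ y‖ * ‖u.toBoundedContinuousFunction‖) (.of_forall fun j => by fun_prop)
    (.of_forall fun j => .of_forall fun y => ?_) (φ.integrable.norm.mul_const _)
    (.of_forall fun y => ?_)
  · rw [norm_mul]
    gcongr
    exact u.toBoundedContinuousFunction.norm_coe_le_norm _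
  · exact ((hu.tendsto _).comp ((tendsto_scale.smul_const y).const_sub x)).const_mul _

end LittlewoodPaley

section ProjectionBounds

variable {ψ₀ Ψ : 𝓢(Rn n, ℝ)} {p r : ℝ≥0∞}

theorem aestronglyMeasurable_schwartz (f : 𝓢(Rn n, ℝ)) : AEStronglyMeasurable f volume :=
  f.continuous.aestronglyMeasurable

theorem enorm_mul_real : ‖ContinuousLinearMap.mul ℝ ℝ‖ₑ = 1 := by
  rw [← ofReal_norm, ContinuousLinearMap.opNorm_mul, ENNReal.ofReal_one]

theorem eLpNorm_schwartzProj_le (hp : 1 ≤ p) (φ : 𝓢(Rn n, ℝ)) (j : ℤ) (u : 𝓢(Rn n, ℝ)) :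
    eLpNorm (schwartzProj φ j u) p volume ≤ eLpNorm φ 1 volume * eLpNorm u p volume := by
  rw [coe_schwartzProj]
  refine (eLpNorm_convolution_le _ hp (aestronglyMeasurable_schwartz (schwartzKernel φ j))
    (aestronglyMeasurable_schwartz u)).trans_eq ?_
  rw [coe_schwartzKernel, eLpNorm_lpKernel, enorm_mul_real]
  simp

theorem enorm_schwartzProj_le (hp : 1 ≤ p) (φ : 𝓢(Rn n, ℝ)) (j : ℤ) (u : 𝓢(Rn n, ℝ)) (x : Rn n) :
    ‖schwartzProj φ j u x‖ₑ ≤ eLpNorm φ (.conjExponent p) volume *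
      (2 : ℝ≥0∞) ^ (j * (n * p⁻¹.toReal)) * eLpNorm u p volume := by
  have := ENNReal.HolderConjugate.conjExponent hp
  have inv_add_inv : p⁻¹.toReal + (ENNReal.conjExponent p)⁻¹.toReal = 1 := by
    rw [← ENNReal.toReal_add, ENNReal.HolderConjugate.inv_add_inv_eq_one p, ENNReal.toReal_one]
    · exact ENNReal.inv_ne_top.2 (zero_lt_one.trans_le hp).ne'
    · exact ENNReal.inv_ne_top.2 (ENNReal.HolderConjugate.ne_zero _ p)
  rw [coe_schwartzProj]
  refine (enorm_convolution_le_eLpNorm_mul_eLpNorm _ (.conjExponent p) p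
    (aestronglyMeasurable_schwartz (schwartzKernel φ j))
    (aestronglyMeasurable_schwartz u) x).trans_eq ?_
  rw [coe_schwartzKernel, eLpNorm_lpKernel, enorm_mul_real, one_mul,
    ← eq_sub_of_add_eq inv_add_inv, mul_comm (_ ^ _)]

theorem exists_eLpNorm_schwartzProj_le_two_rpow_mul (hp : 1 ≤ p) (hpr : p ≤ r) (φ : 𝓢(Rn n, ℝ)) :
    ∃ C : ℝ≥0, ∀ (j : ℤ) (u : 𝓢(Rn n, ℝ)), eLpNorm (schwartzProj φ j u) r volume ≤
      C * (2 : ℝ≥0∞) ^ (j * (n * (p⁻¹.toReal - r⁻¹.toReal))) * eLpNorm u p volume := by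
  -- Bernstein's inequality, by interpolation between the `L^∞` and `L^p` bounds.
  set θ := (p / r).toReal with hθ
  have θ_nonneg : 0 ≤ θ := ENNReal.toReal_nonneg
  have θ_le_one : θ ≤ 1 := by
    rw [hθ, ← ENNReal.toReal_one]
    exact ENNReal.toReal_mono ENNReal.one_ne_top (ENNReal.div_le_of_le_mul (by rwa [one_mul]))
  have inv_mul_θ : p⁻¹.toReal * (1 - θ) = p⁻¹.toReal - r⁻¹.toReal := by
    have inv_mul_div : p⁻¹ * (p / r) = r⁻¹ := by
      obtain rfl | hp_top := eq_or_ne p ∞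
      · simp [top_le_iff.1 hpr]
      · rw [div_eq_mul_inv, ← mul_assoc,
          ENNReal.inv_mul_cancel (zero_lt_one.trans_le hp).ne' hp_top, one_mul]
    rw [mul_one_sub, hθ, ← ENNReal.toReal_mul, inv_mul_div]
  set K := eLpNorm φ (.conjExponent p) volume
  set L := eLpNorm φ 1 volume
  have constant_ne_top : K ^ (1 - θ) * L ^ θ ≠ ∞ := by
    finiteness [(φ.memLp (.conjExponent p) volume).2, (φ.memLp 1 volume).2]
  lift K ^ (1 - θ) * L ^ θ to ℝ≥0 using constant_ne_top with C hC
  refine ⟨C, fun j u => ?_⟩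
  set N := eLpNorm u p volume
  calc eLpNorm (schwartzProj φ j u) r volume
      ≤ eLpNorm (schwartzProj φ j u) ∞ volume ^ (1 - θ) *
          eLpNorm (schwartzProj φ j u) p volume ^ θ :=
        eLpNorm_le_eLpNorm_top_rpow_mul_eLpNorm_rpow (zero_lt_one.trans_le hp).ne' hpr
          (aestronglyMeasurable_schwartz _)
    _ ≤ (K * 2 ^ (j * (n * p⁻¹.toReal)) * N) ^ (1 - θ) * (L * N) ^ θ := by
        gcongr
        · exact eLpNormEssSup_le_of_ae_enorm_bound (.of_forall (enorm_schwartzProj_le hp φ j u))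
        · exact eLpNorm_schwartzProj_le hp φ j u
    _ = K ^ (1 - θ) * L ^ θ * 2 ^ (j * (n * p⁻¹.toReal) * (1 - θ)) * (N ^ (1 - θ) * N ^ θ) := by
        simp only [ENNReal.mul_rpow_of_nonneg _ _ θ_nonneg,
          ENNReal.mul_rpow_of_nonneg _ _ (sub_nonneg.2 θ_le_one), ENNReal.rpow_mul]
        ring
    _ = C * 2 ^ (j * (n * (p⁻¹.toReal - r⁻¹.toReal))) * N := by
        rw [← ENNReal.rpow_add_of_nonneg _ _ (sub_nonneg.2 θ_le_one) θ_nonneg, sub_add_cancel,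
          ENNReal.rpow_one, mul_assoc (j : ℝ), mul_assoc (n : ℝ), inv_mul_θ, hC]

theorem IsLowPiece.enorm_sub_schwartzProj_le_tsum (hΨ : IsLowPiece ψ₀ Ψ) (hψ : IsLPF n ψ₀) (m : ℕ)
    (u : 𝓢(Rn n, ℝ)) (x : Rn n) :
    ‖(u - schwartzProj Ψ m u) x‖ₑ ≤ ∑' j : ℕ, ‖schwartzProj ψ₀ (m + j) u x‖ₑ := by
  have tendsto_low : Tendsto (fun N : ℕ => schwartzProj Ψ (m + N) u x) atTop (𝓝 (u x)) := by
    simpa only [Function.comp_def, Nat.cast_add, coe_schwartzProj, add_comm] using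
      (tendsto_lpProj_atTop (hΨ.integral_eq_one hψ) u x).comp (tendsto_add_atTop_nat m)
  refine le_of_tendsto (tendsto_low.sub_const (schwartzProj Ψ m u x)).enorm
    (.of_forall fun N => ?_)
  rw [hΨ.schwartzProj_add_natCast hψ, add_apply, add_sub_cancel_left,
    sum_apply]
  exact (enorm_sum_le _ _).trans (ENNReal.sum_le_tsum _)

theorem IsLowPiece.eLpNorm_sub_schwartzProj_le_tsum (hΨ : IsLowPiece ψ₀ Ψ) (hψ : IsLPF n ψ₀)
    (hp : 1 ≤ p) (m : ℕ) (u : 𝓢(Rn n, ℝ)) : eLpNorm (u - schwartzProj Ψ m u) p volume ≤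
      ∑' j : ℕ, eLpNorm (schwartzProj ψ₀ (m + j) u) p volume :=
  calc eLpNorm (u - schwartzProj Ψ m u) p volume
      ≤ eLpNorm (fun x => ∑' j : ℕ, ‖schwartzProj ψ₀ (m + j) u x‖ₑ) p volume :=
        eLpNorm_mono_enorm (hΨ.enorm_sub_schwartzProj_le_tsum hψ m u)
    _ ≤ ∑' j : ℕ, eLpNorm (fun x => ‖schwartzProj ψ₀ (m + j) u x‖ₑ) p volume :=
        eLpNorm_tsum_le hp fun j => (aestronglyMeasurable_schwartz _).enorm
    _ = ∑' j : ℕ, eLpNorm (schwartzProj ψ₀ (m + j) u) p volume := by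
        simp only [eLpNorm_enorm]

end ProjectionBounds

section BesovEmbedding

variable {ψ₀ Ψ : 𝓢(Rn n, ℝ)} {s : ℝ} {p q r : ℝ≥0∞}

theorem two_rpow_mul_two_rpow (x y : ℝ) : (2 : ℝ≥0∞) ^ x * 2 ^ y = 2 ^ (x + y) :=
  (ENNReal.rpow_add x y two_ne_zero ENNReal.ofNat_ne_top).symm

/-- The sequence `2^{js} ‖Δ_j u‖_{L^p}`, `j ≥ 0`, whose `ℓ^q` norm is the high-frequency part of
the Besov norm. -/
def besovSeq (ψ₀ : 𝓢(Rn n, ℝ)) (s : ℝ) (p : ℝ≥0∞) (u : 𝓢(Rn n, ℝ)) (j : ℕ) : ℝ≥0∞ :=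
  2 ^ (j * s) * eLpNorm (schwartzProj ψ₀ j u) p volume

theorem besovNorm_eq_add_eLpNorm_besovSeq (hq : q ≠ 0) (u : 𝓢(Rn n, ℝ)) :
    besovNorm ψ₀ Ψ s p q u =
      eLpNorm (schwartzProj Ψ 0 u) p volume + eLpNorm (besovSeq ψ₀ s p u) q .count := by
  have low_eq : ⇑(schwartzProj Ψ 0 u) = (fun x => Ψ x) ⋆[.mul ℝ ℝ] u := by
    rw [coe_schwartzProj, lpProj]
    congr
    ext x
    simp [lpKernel]
  have weight_eq (j : ℕ) : ENNReal.ofReal ((2 : ℝ) ^ (j * s)) = 2 ^ (j * s) := by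
    rw [← ENNReal.ofReal_rpow_of_pos two_pos, ENNReal.ofReal_ofNat]
  simp only [besovNorm, weight_eq, ← low_eq, ← coe_schwartzProj]
  split_ifs with hq_top
  · simp [hq_top, eLpNorm_exponent_top, besovSeq]
  · simp [eLpNorm_eq_lintegral_rpow_enorm_toReal hq hq_top, lintegral_count, besovSeq]

theorem eLpNorm_besovSeq_le_besovNorm (hq : q ≠ 0) (u : 𝓢(Rn n, ℝ)) :
    eLpNorm (besovSeq ψ₀ s p u) q .count ≤ besovNorm ψ₀ Ψ s p q u :=
  le_add_self.trans_eq (besovNorm_eq_add_eLpNorm_besovSeq hq u).symm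

theorem two_rpow_mul_eLpNorm_schwartzProj_le (hq : q ≠ 0) (δ : ℝ) (j : ℕ) (u : 𝓢(Rn n, ℝ)) :
    2 ^ (j * δ) * eLpNorm (schwartzProj ψ₀ j u) p volume ≤
      2 ^ (-(j * (s - δ))) * eLpNorm (besovSeq ψ₀ s p u) q .count :=
  calc 2 ^ (j * δ) * eLpNorm (schwartzProj ψ₀ j u) p volume
      = 2 ^ (-(j * (s - δ))) * besovSeq ψ₀ s p u j := by
        rw [besovSeq, ← mul_assoc, two_rpow_mul_two_rpow]
        ring_nf
    _ ≤ 2 ^ (-(j * (s - δ))) * eLpNorm (besovSeq ψ₀ s p u) q .count := by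
        gcongr
        exact enorm_le_eLpNorm_count (besovSeq ψ₀ s p u) j hq

theorem IsLowPiece.exists_eLpNorm_schwartzProj_le (hΨ : IsLowPiece ψ₀ Ψ) (hψ : IsLPF n ψ₀)
    (hp : 1 ≤ p) (hpr : p ≤ r) : ∃ C : ℝ≥0, ∀ φ : 𝓢(Rn n, ℝ), (∀ ξ, 2 ≤ ‖ξ‖ → ftC φ ξ = 0) →
      ∀ (j : ℤ) (u : 𝓢(Rn n, ℝ)), eLpNorm (schwartzProj φ j u) r volume ≤
        C * (2 : ℝ≥0∞) ^ (j * (n * (p⁻¹.toReal - r⁻¹.toReal))) *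
          eLpNorm (schwartzProj φ j u) p volume := by
  obtain ⟨C, bernstein⟩ := exists_eLpNorm_schwartzProj_le_two_rpow_mul hp hpr Ψ
  set δ := n * (p⁻¹.toReal - r⁻¹.toReal)
  have constant_ne_top : (C : ℝ≥0∞) * 2 ^ (2 * δ) ≠ ∞ :=
    ENNReal.mul_ne_top ENNReal.coe_ne_top
      (ENNReal.rpow_ne_top_of_ne_zero two_ne_zero ENNReal.ofNat_ne_top)
  lift (C : ℝ≥0∞) * 2 ^ (2 * δ) to ℝ≥0 using constant_ne_top with C' hC'
  refine ⟨C', fun φ hφ j u => ?_⟩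
  have block_le := bernstein (j + 2) (schwartzProj φ j u)
  rw [hΨ.schwartzProj_add_two_schwartzProj hψ hφ] at block_le
  rw [hC', mul_assoc (C : ℝ≥0∞), two_rpow_mul_two_rpow]
  convert block_le using 4
  push_cast
  ring

theorem IsLowPiece.exists_eLpNorm_le_mul_besovNorm (hΨ : IsLowPiece ψ₀ Ψ) (hψ : IsLPF n ψ₀)
    (hq : q ≠ 0) (hp : 1 ≤ p) (hpr : p ≤ r) (hs : n * (p⁻¹.toReal - r⁻¹.toReal) < s) :
    ∃ C : ℝ≥0, ∀ u : 𝓢(Rn n, ℝ), eLpNorm u r volume ≤ C * besovNorm ψ₀ Ψ s p q u := by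
  obtain ⟨C, block_le⟩ := hΨ.exists_eLpNorm_schwartzProj_le hψ hp hpr
  set δ := n * (p⁻¹.toReal - r⁻¹.toReal)
  lift ∑' j : ℕ, (2 : ℝ≥0∞) ^ (-(j * (s - δ))) to ℝ≥0
    using tsum_two_rpow_neg_nat_mul_ne_top (sub_pos.2 hs) with W hW
  refine ⟨C * (1 + W), fun u => ?_⟩
  have low_le : eLpNorm (schwartzProj Ψ 0 u) r volume ≤
      C * eLpNorm (schwartzProj Ψ 0 u) p volume := by
    simpa using block_le Ψ (fun ξ hξ => hΨ.ftC_eq_zero hψ (one_le_two.trans hξ)) 0 u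
  have high_le (j : ℕ) : eLpNorm (schwartzProj ψ₀ j u) r volume ≤
      C * (2 ^ (-(j * (s - δ))) * eLpNorm (besovSeq ψ₀ s p u) q .count) := by
    refine (block_le ψ₀ (fun ξ => hψ.ftC_eq_zero_of_le_norm) j u).trans ?_
    rw [mul_assoc, Int.cast_natCast]
    exact mul_le_mul_right (two_rpow_mul_eLpNorm_schwartzProj_le hq δ j u) _
  have tail_le : eLpNorm (u - schwartzProj Ψ 0 u) r volume ≤
      C * (W * eLpNorm (besovSeq ψ₀ s p u) q .count) := by
    refine (hΨ.eLpNorm_sub_schwartzProj_le_tsum hψ (hp.trans hpr) 0 u).trans ?_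
    simp only [Nat.cast_zero, zero_add]
    refine (ENNReal.tsum_le_tsum high_le).trans_eq ?_
    rw [ENNReal.tsum_mul_left, ENNReal.tsum_mul_right, hW]
  rw [besovNorm_eq_add_eLpNorm_besovSeq hq]
  set S := eLpNorm (schwartzProj Ψ 0 u) p volume
  set B := eLpNorm (besovSeq ψ₀ s p u) q .count
  calc eLpNorm u r volume
      = eLpNorm (⇑(schwartzProj Ψ 0 u) + ⇑(u - schwartzProj Ψ 0 u)) r volume := by
        congr
        ext x
        simp
    _ ≤ C * S + C * (W * B) :=
        (eLpNorm_add_le (aestronglyMeasurable_schwartz _) (aestronglyMeasurable_schwartz _)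
          (hp.trans hpr)).trans (add_le_add low_le tail_le)
    _ ≤ (C * S + C * (W * B)) + (C * B + C * (W * S)) := le_self_add
    _ = ↑(C * (1 + W)) * (S + B) := by
        push_cast
        ring

end BesovEmbedding

section ProductEstimate

variable {ψ₀ Ψ : 𝓢(Rn n, ℝ)} {s : ℝ} {p p₁ q r : ℝ≥0∞}

theorem exists_holderTriple_of_le_two_mul (hp : 1 ≤ p) (hpp₁ : p ≤ p₁) (hp₁ : p₁ ≤ 2 * p) :
    ∃ r, p₁.HolderTriple r p ∧ p₁ ≤ r ∧
      p₁⁻¹.toReal - r⁻¹.toReal = 2 * p₁⁻¹.toReal - p⁻¹.toReal := by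
  have inv_le : p₁⁻¹ ≤ p⁻¹ := ENNReal.inv_le_inv.2 hpp₁
  have inv_le_two_mul : p⁻¹ ≤ p₁⁻¹ + p₁⁻¹ := by
    calc p⁻¹ = 2 * (2 * p)⁻¹ := by
          rw [ENNReal.mul_inv (.inl two_ne_zero) (.inl ENNReal.ofNat_ne_top), ← mul_assoc,
            ENNReal.mul_inv_cancel two_ne_zero ENNReal.ofNat_ne_top, one_mul]
      _ ≤ 2 * p₁⁻¹ := by gcongr
      _ = p₁⁻¹ + p₁⁻¹ := two_mul _
  have p_inv_ne_top : p⁻¹ ≠ ∞ := ENNReal.inv_ne_top.2 (zero_lt_one.trans_le hp).ne'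
  refine ⟨(p⁻¹ - p₁⁻¹)⁻¹, ⟨?_⟩, ?_, ?_⟩
  · rw [inv_inv, add_tsub_cancel_of_le inv_le]
  · rw [ENNReal.le_inv_iff_le_inv, tsub_le_iff_right]
    exact inv_le_two_mul
  · rw [inv_inv, ENNReal.toReal_sub_of_le inv_le p_inv_ne_top]
    ring

theorem eLpNorm_schwartzMul_le [p₁.HolderTriple r p] (u v : 𝓢(Rn n, ℝ)) :
    eLpNorm (schwartzMul u v) p volume ≤ eLpNorm u p₁ volume * eLpNorm v r volume :=
  eLpNorm_smul_le_mul_eLpNorm (φ := u) (f := v) (aestronglyMeasurable_schwartz v)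
    (aestronglyMeasurable_schwartz u)

theorem IsLowPiece.eLpNorm_schwartzProj_schwartzMul_le [p₁.HolderTriple r p]
    (hΨ : IsLowPiece ψ₀ Ψ) (hψ : IsLPF n ψ₀) (hp : 1 ≤ p) (k : ℤ) (u v : 𝓢(Rn n, ℝ)) :
    eLpNorm (schwartzProj ψ₀ (k + 2) (schwartzMul u v)) p volume ≤
      eLpNorm ψ₀ 1 volume * (1 + eLpNorm Ψ 1 volume) *
        (eLpNorm (u - schwartzProj Ψ k u) p₁ volume * eLpNorm v r volume +
          eLpNorm u r volume * eLpNorm (v - schwartzProj Ψ k v) p₁ volume) := by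
  set u₀ := schwartzProj Ψ k u
  set v₀ := schwartzProj Ψ k v
  set M := eLpNorm Ψ 1 volume
  have mul_eq : schwartzMul u v =
      schwartzMul u₀ v₀ + (schwartzMul (u - u₀) v + schwartzMul u₀ (v - v₀)) := by
    ext x
    simp only [schwartzMul_apply, add_apply, sub_apply]
    ring
  have low_high_le : eLpNorm (schwartzMul u₀ (v - v₀)) p volume ≤
      M * eLpNorm u r volume * eLpNorm (v - v₀) p₁ volume := by
    refine (eLpNorm_schwartzMul_le (p₁ := r) (r := p₁) u₀ (v - v₀)).trans ?_
    gcongr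
    exact eLpNorm_schwartzProj_le (hp.trans (ENNReal.HolderTriple.le r p₁ p)) Ψ k u
  rw [mul_eq, schwartzProj_add, hΨ.schwartzProj_schwartzMul_eq_zero hψ, zero_add, mul_assoc]
  refine (eLpNorm_schwartzProj_le hp ψ₀ (k + 2) _).trans (mul_le_mul_right ?_ _)
  calc eLpNorm (⇑(schwartzMul (u - u₀) v) + ⇑(schwartzMul u₀ (v - v₀))) p volume
      ≤ eLpNorm (u - u₀) p₁ volume * eLpNorm v r volume +
          M * eLpNorm u r volume * eLpNorm (v - v₀) p₁ volume :=
        (eLpNorm_add_le (aestronglyMeasurable_schwartz _) (aestronglyMeasurable_schwartz _)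
          hp).trans (add_le_add (eLpNorm_schwartzMul_le (u - u₀) v) low_high_le)
    _ ≤ _ + (M * (eLpNorm (u - u₀) p₁ volume * eLpNorm v r volume) +
          eLpNorm u r volume * eLpNorm (v - v₀) p₁ volume) := le_self_add
    _ = _ := by ring

theorem IsLowPiece.two_rpow_mul_eLpNorm_sub_schwartzProj_le (hΨ : IsLowPiece ψ₀ Ψ)
    (hψ : IsLPF n ψ₀) (hp : 1 ≤ p) (k : ℕ) (u : 𝓢(Rn n, ℝ)) :
    2 ^ (k * s) * eLpNorm (u - schwartzProj Ψ k u) p volume ≤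
      ∑' j : ℕ, 2 ^ (-(j * s)) * besovSeq ψ₀ s p u (k + j) := by
  refine (mul_le_mul_right (hΨ.eLpNorm_sub_schwartzProj_le_tsum hψ hp k u) _).trans_eq ?_
  rw [← ENNReal.tsum_mul_left]
  congr! 2 with j
  rw [besovSeq, ← mul_assoc, two_rpow_mul_two_rpow]
  push_cast
  ring_nf

theorem IsLowPiece.besovSeq_schwartzMul_add_two_le [p₁.HolderTriple r p] (hΨ : IsLowPiece ψ₀ Ψ)
    (hψ : IsLPF n ψ₀) (hp : 1 ≤ p) (k : ℕ) (u v : 𝓢(Rn n, ℝ)) :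
    besovSeq ψ₀ s p (schwartzMul u v) (k + 2) ≤
      2 ^ (2 * s) * (eLpNorm ψ₀ 1 volume * (1 + eLpNorm Ψ 1 volume)) * (
        (∑' j : ℕ, 2 ^ (-(j * s)) * besovSeq ψ₀ s p₁ u (k + j)) * eLpNorm v r volume +
        eLpNorm u r volume * ∑' j : ℕ, 2 ^ (-(j * s)) * besovSeq ψ₀ s p₁ v (k + j)) := by
  set L := eLpNorm ψ₀ 1 volume * (1 + eLpNorm Ψ 1 volume)
  have tail_le := hΨ.two_rpow_mul_eLpNorm_sub_schwartzProj_le (s := s) hψ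
    (hp.trans (ENNReal.HolderTriple.le p₁ r p)) k
  calc besovSeq ψ₀ s p (schwartzMul u v) (k + 2)
      = 2 ^ (2 * s) * 2 ^ (k * s) *
          eLpNorm (schwartzProj ψ₀ (k + 2) (schwartzMul u v)) p volume := by
        rw [besovSeq, two_rpow_mul_two_rpow]
        push_cast
        ring_nf
    _ ≤ 2 ^ (2 * s) * 2 ^ (k * s) * (L *
          (eLpNorm (u - schwartzProj Ψ k u) p₁ volume * eLpNorm v r volume +
            eLpNorm u r volume * eLpNorm (v - schwartzProj Ψ k v) p₁ volume)) := by
        gcongr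
        exact hΨ.eLpNorm_schwartzProj_schwartzMul_le hψ hp k u v
    _ = 2 ^ (2 * s) * L *
          (2 ^ (k * s) * eLpNorm (u - schwartzProj Ψ k u) p₁ volume * eLpNorm v r volume +
            eLpNorm u r volume *
              (2 ^ (k * s) * eLpNorm (v - schwartzProj Ψ k v) p₁ volume)) := by ring
    _ ≤ _ := by
        gcongr
        exacts [tail_le u, tail_le v]

theorem IsLowPiece.eLpNorm_besovSeq_schwartzMul_add_two_le [p₁.HolderTriple r p]
    (hΨ : IsLowPiece ψ₀ Ψ) (hψ : IsLPF n ψ₀) (hp : 1 ≤ p) (hq : 1 ≤ q) (u v : 𝓢(Rn n, ℝ)) :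
    eLpNorm (fun k => besovSeq ψ₀ s p (schwartzMul u v) (k + 2)) q .count ≤
      2 ^ (2 * s) * (eLpNorm ψ₀ 1 volume * (1 + eLpNorm Ψ 1 volume)) *
        (∑' j : ℕ, 2 ^ (-(j * s))) *
          (eLpNorm (besovSeq ψ₀ s p₁ u) q .count * eLpNorm v r volume +
            eLpNorm u r volume * eLpNorm (besovSeq ψ₀ s p₁ v) q .count) := by
  set A := 2 ^ (2 * s) * (eLpNorm ψ₀ 1 volume * (1 + eLpNorm Ψ 1 volume))
  let w (j : ℕ) : ℝ≥0∞ := 2 ^ (-(j * s))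
  have young (a : ℕ → ℝ≥0∞) := eLpNorm_count_tsum_mul_comp_add_le hq w a
  calc eLpNorm (fun k => besovSeq ψ₀ s p (schwartzMul u v) (k + 2)) q .count
      ≤ eLpNorm (fun k =>
          A * eLpNorm v r volume * (∑' j, w j * besovSeq ψ₀ s p₁ u (k + j)) +
          A * eLpNorm u r volume * (∑' j, w j * besovSeq ψ₀ s p₁ v (k + j))) q .count := by
        refine eLpNorm_mono_enorm fun k => ?_
        simp only [enorm_eq_self]
        refine (hΨ.besovSeq_schwartzMul_add_two_le (r := r) (p₁ := p₁) hψ hp k u v).trans_eq ?_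
        ring
    _ ≤ A * eLpNorm v r volume * ((∑' j, w j) * eLpNorm (besovSeq ψ₀ s p₁ u) q .count) +
          A * eLpNorm u r volume * ((∑' j, w j) * eLpNorm (besovSeq ψ₀ s p₁ v) q .count) := by
        refine (eLpNorm_count_mul_add_mul_le hq _ _ _ _).trans ?_
        gcongr
        exacts [young _, young _]
    _ = _ := by ring

theorem besovNorm_le_add_eLpNorm_besovSeq_add_two (hp : 1 ≤ p) (hq : 1 ≤ q) (u : 𝓢(Rn n, ℝ)) :
    besovNorm ψ₀ Ψ s p q u ≤
      (eLpNorm Ψ 1 volume + (1 + 2 ^ s) * eLpNorm ψ₀ 1 volume) * eLpNorm u p volume +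
        eLpNorm (fun k => besovSeq ψ₀ s p u (k + 2)) q .count := by
  have block_le (j : ℕ) :
      besovSeq ψ₀ s p u j ≤ 2 ^ (j * s) * (eLpNorm ψ₀ 1 volume * eLpNorm u p volume) :=
    mul_le_mul_right (eLpNorm_schwartzProj_le hp ψ₀ j u) _
  calc besovNorm ψ₀ Ψ s p q u
      = eLpNorm (schwartzProj Ψ 0 u) p volume + eLpNorm (besovSeq ψ₀ s p u) q .count :=
        besovNorm_eq_add_eLpNorm_besovSeq (zero_lt_one.trans_le hq).ne' u
    _ ≤ eLpNorm (schwartzProj Ψ 0 u) p volume + (besovSeq ψ₀ s p u 0 + (besovSeq ψ₀ s p u 1 +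
          eLpNorm (fun k => besovSeq ψ₀ s p u (k + 2)) q .count)) := by
        gcongr
        refine (eLpNorm_count_le_zero_add_comp_succ hq _).trans ?_
        gcongr
        exact eLpNorm_count_le_zero_add_comp_succ hq _
    _ ≤ eLpNorm Ψ 1 volume * eLpNorm u p volume +
          (eLpNorm ψ₀ 1 volume * eLpNorm u p volume +
            (2 ^ s * (eLpNorm ψ₀ 1 volume * eLpNorm u p volume) +
              eLpNorm (fun k => besovSeq ψ₀ s p u (k + 2)) q .count)) := by
        gcongr
        · exact eLpNorm_schwartzProj_le hp Ψ 0 u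
        · simpa using block_le 0
        · simpa using block_le 1
    _ = _ := by ring

theorem IsLowPiece.exists_besovNorm_schwartzMul_le_add [p₁.HolderTriple r p]
    (hΨ : IsLowPiece ψ₀ Ψ) (hψ : IsLPF n ψ₀) (hs : 0 < s) (hp : 1 ≤ p) (hq : 1 ≤ q) :
    ∃ C : ℝ≥0, ∀ u v : 𝓢(Rn n, ℝ), besovNorm ψ₀ Ψ s p q (schwartzMul u v) ≤
      C * (besovNorm ψ₀ Ψ s p₁ q u * eLpNorm v r volume +
        eLpNorm u r volume * besovNorm ψ₀ Ψ s p₁ q v) := by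
  have hp₁ : 1 ≤ p₁ := hp.trans (ENNReal.HolderTriple.le p₁ r p)
  have q_ne : q ≠ 0 := (zero_lt_one.trans_le hq).ne'
  obtain ⟨C₀, eLpNorm_le⟩ := hΨ.exists_eLpNorm_le_mul_besovNorm (r := p₁) (s := s) hψ q_ne hp₁
    le_rfl (by simpa using hs)
  set H := eLpNorm Ψ 1 volume + (1 + 2 ^ s) * eLpNorm ψ₀ 1 volume
  set T := 2 ^ (2 * s) * (eLpNorm ψ₀ 1 volume * (1 + eLpNorm Ψ 1 volume)) *
    (∑' j : ℕ, (2 : ℝ≥0∞) ^ (-(j * s)))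
  have constant_ne_top : H * C₀ + T ≠ ∞ := by
    have := (ψ₀.memLp 1).eLpNorm_ne_top
    have := (Ψ.memLp 1).eLpNorm_ne_top
    have := tsum_two_rpow_neg_nat_mul_ne_top hs
    finiteness
  lift H * C₀ + T to ℝ≥0 using constant_ne_top with C hC
  refine ⟨C, fun u v => ?_⟩
  set N := besovNorm ψ₀ Ψ s p₁ q
  calc besovNorm ψ₀ Ψ s p q (schwartzMul u v)
      ≤ H * eLpNorm (schwartzMul u v) p volume +
          eLpNorm (fun k => besovSeq ψ₀ s p (schwartzMul u v) (k + 2)) q .count :=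
        besovNorm_le_add_eLpNorm_besovSeq_add_two hp hq _
    _ ≤ H * (C₀ * N u * eLpNorm v r volume) +
          T * (N u * eLpNorm v r volume + eLpNorm u r volume * N v) := by
        gcongr
        · refine (eLpNorm_schwartzMul_le (p₁ := p₁) (r := r) u v).trans ?_
          gcongr
          exact eLpNorm_le u
        · refine (hΨ.eLpNorm_besovSeq_schwartzMul_add_two_le (p₁ := p₁) (r := r)
            hψ hp hq u v).trans ?_
          gcongr
          exacts [eLpNorm_besovSeq_le_besovNorm q_ne u, eLpNorm_besovSeq_le_besovNorm q_ne v]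
    _ ≤ H * (C₀ * N u * eLpNorm v r volume) +
          T * (N u * eLpNorm v r volume + eLpNorm u r volume * N v) +
          H * C₀ * (eLpNorm u r volume * N v) := le_self_add
    _ = C * (N u * eLpNorm v r volume + eLpNorm u r volume * N v) := by
        rw [hC]
        ring

end ProductEstimate

theorem besov_square_estimate_general {ψ₀ Ψ : 𝓢(Rn n, ℝ)} (hψ : IsLPF n ψ₀)
    (hΨ : IsLowPiece ψ₀ Ψ) {s : ℝ} {p p₁ q : ℝ≥0∞} (hq : 1 ≤ q) (hp : 1 ≤ p) (hpp₁ : p ≤ p₁)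
    (hp₁ : p₁ ≤ 2 * p) (hs : n * (2 * p₁⁻¹.toReal - p⁻¹.toReal) < s) :
    ∃ C : ℝ, 0 < C ∧ ∀ u v : 𝓢(Rn n, ℝ), besovNorm ψ₀ Ψ s p q (fun x => u x * v x) ≤
      ENNReal.ofReal C * (besovNorm ψ₀ Ψ s p₁ q u * besovNorm ψ₀ Ψ s p₁ q v) := by
  obtain ⟨r, _, hp₁r, exponent_eq⟩ := exists_holderTriple_of_le_two_mul hp hpp₁ hp₁
  have one_le_p₁ : 1 ≤ p₁ := hp.trans hpp₁
  have inv_le : r⁻¹.toReal ≤ p₁⁻¹.toReal :=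
    ENNReal.toReal_mono (ENNReal.inv_ne_top.2 (zero_lt_one.trans_le one_le_p₁).ne')
      (ENNReal.inv_le_inv.2 hp₁r)
  rw [← exponent_eq] at hs
  have s_pos : 0 < s := (mul_nonneg n.cast_nonneg (sub_nonneg.2 inv_le)).trans_lt hs
  obtain ⟨A, mul_le⟩ := hΨ.exists_besovNorm_schwartzMul_le_add (p₁ := p₁) (r := r) hψ s_pos hp hq
  obtain ⟨B, embedding⟩ := hΨ.exists_eLpNorm_le_mul_besovNorm hψ (zero_lt_one.trans_le hq).ne'
    one_le_p₁ hp₁r hs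
  refine ⟨↑(A * (2 * B) + 1), by positivity, fun u v => ?_⟩
  rw [ENNReal.ofReal_coe_nnreal]
  set N := besovNorm ψ₀ Ψ s p₁ q
  calc besovNorm ψ₀ Ψ s p q (schwartzMul u v)
      ≤ A * (N u * (B * N v) + B * N u * N v) := by
        refine (mul_le u v).trans ?_
        gcongr
        exacts [embedding v, embedding u]
    _ = ↑(A * (2 * B)) * (N u * N v) := by
        push_cast
        ring
    _ ≤ ↑(A * (2 * B) + 1) * (N u * N v) := by
        gcongr
        exact le_self_add

/-- Besov product estimate for squares: if `s > 0`, `q ∈ [1,∞]`,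
`p, p₁ ∈ [1,∞)` with `p < p₁ ≤ 2p` and `s > n(2/p₁ − 1/p)`, then
`‖u²‖_{B^s_{p,q}} ≤ C ‖u‖²_{B^s_{p₁,q}}` for all Schwartz `u`. -/
theorem besov_square_estimate
    (n : ℕ) (hn : 1 ≤ n) (ψ₀ Ψ : SchwartzMap (Rn n) ℝ)
    (hψ : IsLPF n ψ₀) (hΨ : IsLowPiece ψ₀ Ψ)
    (s : ℝ) (hs : 0 < s) (q : ℝ≥0∞) (hq : 1 ≤ q)
    (p p₁ : ℝ≥0∞) (hp1 : 1 ≤ p) (hpp₁ : p < p₁) (hp₁2p : p₁ ≤ 2 * p) (hp₁fin : p₁ < ∞)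
    (hsn : (n:ℝ) * (2 / p₁.toReal - 1 / p.toReal) < s) :
    ∃ C : ℝ, 0 < C ∧ ∀ u : SchwartzMap (Rn n) ℝ,
      besovNorm ψ₀ Ψ s p q (fun x => u x * u x)
        ≤ ENNReal.ofReal C * (besovNorm ψ₀ Ψ s p₁ q (fun x => u x)) ^ 2 := by
  obtain ⟨C, C_pos, mul_le⟩ := besov_square_estimate_general hψ hΨ (s := s) hq hp1 hpp₁.le hp₁2p
    (by simpa only [ENNReal.toReal_inv, div_eq_mul_inv, one_mul] using hsn)
  exact ⟨C, C_pos, fun u => (mul_le u u).trans_eq (by rw [sq])⟩
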